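/- arXiv:1108.2985 — 2 statements merged into one kernel-verified Lean document; each statement's English description precedes it below -/
import Mathlib

section
/- Let G be a finite group of order n, let D be a finite-dimensional complex representation of G with character χ_D, and let V₁,…,V_r be pairwise non-isomorphic finite-dimensional irreducible complex representations of G, with characters χ₁,…,χ_r and dimensions d₁,…,d_r, such that every finite-dimensional irreducible complex representation of G is isomorphic to some V_i. Let k_i = (1/n)·Σ_{g∈G} χ_D(g)·χ_i(g⁻¹) be the multiplicity of V_i in D, and assume k_i ≠ 0 for every i. Then M^{χ_D} is invertible and its inverse has entries ((M^{χ_D})⁻¹)_{g,h} = (1/n²)·Σ_{i=1}^r (d_i²/k_i)·χ_i(g⁻¹h). -/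
open FDRep CategoryTheory

/-- For a representation with character `χ`, the matrix `M^χ` indexed by the group elements,
with entries `(M^χ)_{g,h} = χ(g⁻¹ h)`. -/
noncomputable def charMatrix {G : Type} [Group G] [Fintype G] (V : FDRep ℂ G) : Matrix G G ℂ :=
  Matrix.of fun g h => V.character (g⁻¹ * h)

/-!
The map `φ ↦ M^φ` turns convolution of functions on `G` into matrix multiplication. By Schur's
lemma a class function `φ` acts on `V i` as a scalar, so convolving `φ` with `χ i` multiplies `χ i`
by `n * k i / d i`. Since the irreducible characters span the class functions, the delta function
at `1` is `n⁻¹ * ∑ i, d i * χ i`, and one solves for the convolution inverse of `φ` coefficient by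
coefficient.
-/

universe u v

open Module

section GroupMatrix

variable {G R : Type*} [Group G]

/-- The matrix `M^φ` with entries `φ (g⁻¹ * h)`, for an arbitrary function `φ` on a group. -/
def groupMatrix (φ : G → R) : Matrix G G R :=
  Matrix.of fun g h => φ (g⁻¹ * h)

theorem groupMatrix_single_one [DecidableEq G] [Zero R] [One R] :
    groupMatrix (Pi.single 1 1 : G → R) = 1 := by
  ext g h
  simp only [groupMatrix, Matrix.of_apply, Pi.single_apply, inv_mul_eq_one, Matrix.one_apply]

theorem groupMatrix_mul [Fintype G] [NonUnitalNonAssocSemiring R] (φ ψ : G → R) :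
    groupMatrix φ * groupMatrix ψ = groupMatrix fun g => ∑ x, φ x * ψ (x⁻¹ * g) := by
  ext g h
  simp only [groupMatrix, Matrix.mul_apply, Matrix.of_apply]
  exact Fintype.sum_equiv (Equiv.mulLeft g⁻¹) _ _ fun x => by simp [mul_assoc]

end GroupMatrix

section Simple

open MonoidAlgebra Representation

theorem simple_of_simple_map {C D : Type*} [Category* C] [Category* D] [Limits.HasZeroMorphisms C]
    [Limits.HasZeroMorphisms D] (F : C ⥤ D) [F.PreservesZeroMorphisms] [F.Faithful]
    [F.PreservesMonomorphisms] [F.ReflectsIsomorphisms] (X : C) [Simple (F.obj X)] :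
    Simple X where
  mono_isIso_iff_nonzero f _ := by
    rw [← isIso_iff_of_reflects_iso f F, Simple.mono_isIso_iff_nonzero, Ne, F.map_eq_zero_iff]

theorem simple_of_isIrreducible {K : Type u} {G : Type v} [Field K] [Monoid G] (V : FDRep K G)
    [IsIrreducible V.ρ] : Simple V := by
  let F := forget₂ (FDRep K G) (Rep K G) ⋙ Rep.toModuleMonoidAlgebra
  have : F.PreservesZeroMorphisms := ⟨fun _ _ => rfl⟩
  have : IsSimpleModule K[G] (F.obj V) :=
    (irreducible_iff_isSimpleModule_asModule V.ρ).mp inferInstance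
  have : Simple (F.obj V) := (simple_iff_isSimpleModule' _).mpr this
  exact simple_of_simple_map F V

section OfModule

variable {K G M : Type*} [Field K] [Monoid G] [AddCommGroup M] [Module K M] [Module K[G] M]
  [IsScalarTower K K[G] M]

theorem asAlgebraHom_ofModule'_apply (a : K[G]) (x : M) :
    asAlgebraHom (ofModule' M) a x = a • x := by
  rw [asAlgebraHom_def, ofModule', Equiv.apply_symm_apply, Algebra.lsmul_coe]

theorem isIrreducible_ofModule' [IsSimpleModule K[G] M] :
    IsIrreducible (ofModule' M : Representation K G M) := by
  let ρ : Representation K G M := ofModule' M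
  let e : ρ.asModule ≃ₗ[K[G]] M :=
    { ρ.asModuleEquiv with
      map_smul' := fun a x =>
        (ρ.asModuleEquiv_map_smul a x).trans (asAlgebraHom_ofModule'_apply a _) }
  exact ρ.irreducible_iff_isSimpleModule_asModule.mpr (.congr e)

end OfModule

variable {K : Type u} {G : Type v} [Field K] [Group G] [Finite G]

theorem smul_eq_zero_of_forall_simple {a : K[G]}
    (ha : ∀ W : FDRep K G, Simple W → asAlgebraHom W.ρ a = 0)
    {M : Type u} [AddCommGroup M] [Module K[G] M] [IsSimpleModule K[G] M] (x : M) :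
    a • x = 0 := by
  let : Module K M := .compHom M (algebraMap K K[G])
  have : IsScalarTower K K[G] M := .of_algebraMap_smul fun _ _ => rfl
  have : Module.Finite K M := .trans K[G] _
  let W : FDRep K G := .of (ofModule' M)
  have : IsIrreducible W.ρ := isIrreducible_ofModule' (M := M)
  rw [← asAlgebraHom_ofModule'_apply]
  exact DFunLike.congr_fun (ha W (simple_of_isIrreducible W)) x

theorem eq_zero_of_forall_simple [NeZero (Nat.card G : K)] {a : K[G]}
    (ha : ∀ W : FDRep K G, Simple W → asAlgebraHom W.ρ a = 0) : a = 0 := by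
  suffices a ∈ Ring.jacobson K[G] by
    rwa [IsSemisimpleRing.jacobson_eq_bot, Submodule.mem_bot] at this
  refine Submodule.mem_sInf.mpr fun m hm => ?_
  have : IsSimpleModule K[G] (K[G] ⧸ m) := isSimpleModule_iff_isCoatom.mpr hm
  -- `K[G] ⧸ m` lives in `Type (max u v)`, whereas objects of `FDRep K G` live in `Type u`.
  have : Module.Finite K (K[G] ⧸ m) := .trans K[G] _
  have : Small.{u} (K[G] ⧸ m) := Module.Finite.small K _
  let e := Shrink.linearEquiv.{u} K[G] (K[G] ⧸ m)
  have : IsSimpleModule K[G] (Shrink.{u} (K[G] ⧸ m)) := .congr e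
  have h := smul_eq_zero_of_forall_simple ha (e.symm (Submodule.Quotient.mk 1))
  rwa [← map_smul, LinearEquiv.map_eq_zero_iff, ← Submodule.Quotient.mk_smul,
    Submodule.Quotient.mk_eq_zero, smul_eq_mul, mul_one] at h

end Simple

/-- A class function on `G`. Commuting arguments is the same as conjugation invariance, and is the
form in which the condition holds for traces. -/
def IsClassFunction {G α : Type*} [Mul G] (φ : G → α) : Prop :=
  ∀ g h, φ (g * h) = φ (h * g)

theorem isClassFunction_single_one {G α : Type*} [Group G] [DecidableEq G] [Zero α] (a : α) :
    IsClassFunction (Pi.single 1 a : G → α) := fun g h => by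
  simp only [Pi.single_apply, mul_eq_one_comm (a := g)]

section Characters

variable {K : Type u} {G : Type v} [Field K] [Group G]

theorem isClassFunction_character (V : FDRep K G) : IsClassFunction V.character :=
  fun g h => V.char_mul_comm h g

theorem exists_eq_smul_one_of_commute_ρ [IsAlgClosed K] (V : FDRep K G) [Simple V]
    {T : End K V} (hT : ∀ g, Commute T (V.ρ g)) : ∃ c : K, T = c • 1 := by
  let f : V ⟶ V :=
    ⟨InducedCategory.homMk (ModuleCat.ofHom T), fun g => by ext1; exact hT g⟩
  obtain ⟨c, hc⟩ := endomorphism_simple_eq_smul_id K f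
  exact ⟨c, (congrArg (fun t : V ⟶ V => t.hom.hom.hom) hc).symm⟩

variable [Fintype G]

theorem IsClassFunction.commute_sum_smul_ρ_inv {φ : G → K} (hφ : IsClassFunction φ)
    (V : FDRep K G) (g : G) : Commute (∑ x, φ x • V.ρ x⁻¹) (V.ρ g) := by
  rw [Commute, SemiconjBy, Finset.sum_mul, Finset.mul_sum]
  refine Fintype.sum_equiv (MulAut.conj g⁻¹).toEquiv _ _ fun x => ?_
  have h : φ (g⁻¹ * (x * g)) = φ x := by rw [hφ, mul_inv_cancel_right]
  simp [h, ← map_mul, mul_assoc]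

/-- The coefficient of the character of `V` in `φ`, that is, the scalar product of `φ` with that
character. When `φ` is itself a character, this is the multiplicity of `V` as an element of `K`. -/
noncomputable def charCoeff (V : FDRep K G) : (G → K) →ₗ[K] K :=
  (Nat.card G : K)⁻¹ • ∑ g, V.character g⁻¹ • LinearMap.proj g

theorem charCoeff_apply (V : FDRep K G) (φ : G → K) :
    charCoeff V φ = (Nat.card G : K)⁻¹ * ∑ g, φ g * V.character g⁻¹ := by
  simp [charCoeff, LinearMap.sum_apply, mul_comm]

theorem charCoeff_eq_of_iso {V W : FDRep K G} (e : V ≅ W) : charCoeff V = charCoeff W := by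
  rw [charCoeff, charCoeff, FDRep.char_iso e]

variable [NeZero (Nat.card G : K)]

theorem charCoeff_single_one_card [DecidableEq G] (V : FDRep K G) :
    charCoeff V (Pi.single 1 (Nat.card G : K)) = finrank K V := by
  simp only [charCoeff_apply, Pi.single_apply, ite_mul, zero_mul, Finset.sum_ite_eq',
    Finset.mem_univ, if_true, inv_one, FDRep.char_one]
  rw [inv_mul_cancel_left₀ (NeZero.ne _)]

theorem trace_sum_smul_ρ_inv (φ : G → K) (V : FDRep K G) :
    LinearMap.trace K V (∑ g, φ g • V.ρ g⁻¹) = Nat.card G * charCoeff V φ := by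
  rw [charCoeff_apply, mul_inv_cancel_left₀ (NeZero.ne _)]
  simp only [map_sum, map_smul, smul_eq_mul, FDRep.character]

variable [IsAlgClosed K]

theorem charCoeff_character_self (V : FDRep K G) [Simple V] : charCoeff V V.character = 1 := by
  let := invertibleOfNonzero (NeZero.ne (Nat.card G : K))
  rw [charCoeff_apply, FDRep.char_orthonormal, if_pos ⟨Iso.refl V⟩]

theorem charCoeff_character_of_not_iso {V W : FDRep K G} [Simple V] [Simple W]
    (h : ¬ Nonempty (W ≅ V)) : charCoeff V W.character = 0 := by
  let := invertibleOfNonzero (NeZero.ne (Nat.card G : K))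
  rw [charCoeff_apply, FDRep.char_orthonormal, if_neg h]

theorem IsClassFunction.exists_sum_smul_ρ_inv_eq {φ : G → K} (hφ : IsClassFunction φ)
    (V : FDRep K G) [Simple V] :
    ∃ c : K, ∑ g, φ g • V.ρ g⁻¹ = c • 1 ∧ c * finrank K V = Nat.card G * charCoeff V φ := by
  obtain ⟨c, hc⟩ := exists_eq_smul_one_of_commute_ρ V (hφ.commute_sum_smul_ρ_inv V)
  refine ⟨c, hc, ?_⟩
  rw [← trace_sum_smul_ρ_inv, hc, map_smul, LinearMap.trace_one, smul_eq_mul]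

omit [Fintype G] in
-- In positive characteristic this says that the characteristic does not divide the dimension:
-- the character of `V` acts on `V` by a scalar `c` with `c * finrank K V = Nat.card G`.
theorem finrank_ne_zero_of_simple [Finite G] (V : FDRep K G) [Simple V] :
    (finrank K V : K) ≠ 0 := by
  have := Fintype.ofFinite G
  obtain ⟨c, -, hc⟩ := (isClassFunction_character V).exists_sum_smul_ρ_inv_eq V
  rw [charCoeff_character_self, mul_one] at hc
  exact right_ne_zero_of_mul (hc.trans_ne (NeZero.ne _))

theorem IsClassFunction.sum_smul_ρ_inv {φ : G → K} (hφ : IsClassFunction φ)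
    (V : FDRep K G) [Simple V] :
    ∑ g, φ g • V.ρ g⁻¹ = (Nat.card G * charCoeff V φ / finrank K V) • (1 : End K V) := by
  obtain ⟨c, hc, hcV⟩ := hφ.exists_sum_smul_ρ_inv_eq V
  rw [hc, ← hcV, mul_div_cancel_right₀ _ (finrank_ne_zero_of_simple V)]

theorem IsClassFunction.sum_mul_character {φ : G → K} (hφ : IsClassFunction φ)
    (V : FDRep K G) [Simple V] (g : G) :
    ∑ x, φ x * V.character (x⁻¹ * g) =
      Nat.card G * charCoeff V φ / finrank K V * V.character g := by
  have h := congrArg (fun T => LinearMap.trace K V (T * V.ρ g)) (hφ.sum_smul_ρ_inv V)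
  simpa only [Finset.sum_mul, smul_mul_assoc, one_mul, ← map_mul, map_sum, map_smul,
    smul_eq_mul, FDRep.character] using h

theorem IsClassFunction.eq_zero_of_charCoeff_eq_zero {φ : G → K} (hφ : IsClassFunction φ)
    (h : ∀ V : FDRep K G, Simple V → charCoeff V φ = 0) : φ = 0 := by
  classical
  have ha : ∑ g, MonoidAlgebra.single g⁻¹ (φ g) = 0 := by
    refine eq_zero_of_forall_simple fun V hV => ?_
    simp only [map_sum, Representation.asAlgebraHom_single]
    rw [hφ.sum_smul_ρ_inv V, h V hV, mul_zero, zero_div, zero_smul]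
  ext g
  simpa [MonoidAlgebra.coeff_sum, Finsupp.single_apply, Finsupp.finsetSum_apply] using
    congrArg (fun a => a.coeff g⁻¹) ha

variable {ι : Type*} [Fintype ι] {V : ι → FDRep K G} [∀ i, Simple (V i)]

theorem IsClassFunction.sum_charCoeff_smul_character
    (hpairwise : Pairwise fun i j => ¬ Nonempty (V i ≅ V j))
    (hcomplete : ∀ W : FDRep K G, Simple W → ∃ i, Nonempty (W ≅ V i))
    {φ : G → K} (hφ : IsClassFunction φ) :
    ∑ i, charCoeff (V i) φ • (V i).character = φ := by
  rw [← sub_eq_zero]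
  refine IsClassFunction.eq_zero_of_charCoeff_eq_zero (fun g h => ?_) fun W hW => ?_
  · simp only [Pi.sub_apply, Finset.sum_apply, Pi.smul_apply, hφ g h,
      isClassFunction_character _ g h]
  · obtain ⟨j, ⟨e⟩⟩ := hcomplete W hW
    have horth (i : ι) (hij : i ≠ j) : charCoeff (V j) (V i).character = 0 :=
      charCoeff_character_of_not_iso (hpairwise hij)
    rw [charCoeff_eq_of_iso e, map_sub, map_sum, Fintype.sum_eq_single j, map_smul,
      charCoeff_character_self, smul_eq_mul, mul_one, sub_self]
    intro i hij
    rw [map_smul, horth i hij, smul_zero]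

omit [Fintype G] in
theorem sum_finrank_smul_character [Finite G] [DecidableEq G]
    (hpairwise : Pairwise fun i j => ¬ Nonempty (V i ≅ V j))
    (hcomplete : ∀ W : FDRep K G, Simple W → ∃ i, Nonempty (W ≅ V i)) :
    ∑ i, (finrank K (V i) : K) • (V i).character = Pi.single 1 (Nat.card G : K) := by
  have := Fintype.ofFinite G
  simpa only [charCoeff_single_one_card] using
    (isClassFunction_single_one (Nat.card G : K)).sum_charCoeff_smul_character hpairwise hcomplete

theorem IsClassFunction.sum_mul_sum_finrank_sq_div_charCoeff [DecidableEq G]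
    (hpairwise : Pairwise fun i j => ¬ Nonempty (V i ≅ V j))
    (hcomplete : ∀ W : FDRep K G, Simple W → ∃ i, Nonempty (W ≅ V i))
    {φ : G → K} (hφ : IsClassFunction φ) (hne : ∀ i, charCoeff (V i) φ ≠ 0) (g : G) :
    ∑ x, φ x * (((Nat.card G : K) ^ 2)⁻¹ * ∑ i,
        (finrank K (V i) : K) ^ 2 / charCoeff (V i) φ * (V i).character (x⁻¹ * g)) =
      (Pi.single 1 1 : G → K) g := by
  have hn : (Nat.card G : K) ≠ 0 := NeZero.ne _
  calc
    _ = ((Nat.card G : K) ^ 2)⁻¹ * ∑ i, (finrank K (V i) : K) ^ 2 / charCoeff (V i) φ *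
          ∑ x, φ x * (V i).character (x⁻¹ * g) := by
      simp only [Finset.mul_sum]
      rw [Finset.sum_comm]
      exact Finset.sum_congr rfl fun _ _ => Finset.sum_congr rfl fun _ _ => by ring
    _ = (Nat.card G : K)⁻¹ * ∑ i, finrank K (V i) * (V i).character g := by
      simp only [hφ.sum_mul_character, Finset.mul_sum]
      refine Finset.sum_congr rfl fun i _ => ?_
      have := hne i
      have := finrank_ne_zero_of_simple (V i)
      field_simp
    _ = (Nat.card G : K)⁻¹ * (Pi.single 1 (Nat.card G : K) : G → K) g := by
      rw [← sum_finrank_smul_character hpairwise hcomplete]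
      simp only [Finset.sum_apply, Pi.smul_apply, smul_eq_mul]
    _ = (Pi.single 1 1 : G → K) g := by
      rw [← smul_eq_mul, ← Pi.smul_apply, ← Pi.single_smul, smul_eq_mul, inv_mul_cancel₀ hn]

theorem inv_charMatrix_general [DecidableEq G]
    (hpairwise : Pairwise fun i j => ¬ Nonempty (V i ≅ V j))
    (hcomplete : ∀ W : FDRep K G, Simple W → ∃ i, Nonempty (W ≅ V i))
    {φ : G → K} (hφ : IsClassFunction φ) (hne : ∀ i, charCoeff (V i) φ ≠ 0) :
    IsUnit (groupMatrix φ).det ∧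
      (groupMatrix φ)⁻¹ = groupMatrix fun g => ((Nat.card G : K) ^ 2)⁻¹ *
        ∑ i, (finrank K (V i) : K) ^ 2 / charCoeff (V i) φ * (V i).character g := by
  have hinv : groupMatrix φ * groupMatrix (fun g => ((Nat.card G : K) ^ 2)⁻¹ *
      ∑ i, (finrank K (V i) : K) ^ 2 / charCoeff (V i) φ * (V i).character g) = 1 := by
    rw [groupMatrix_mul, ← groupMatrix_single_one]
    exact congrArg groupMatrix
      (funext (hφ.sum_mul_sum_finrank_sq_div_charCoeff hpairwise hcomplete hne))
  exact ⟨Matrix.isUnit_det_of_right_inverse hinv, Matrix.inv_eq_right_inv hinv⟩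

end Characters

theorem inv_charMatrix {G : Type} [Group G] [Fintype G] [DecidableEq G]
    (D : FDRep ℂ G)
    (r : ℕ) (V : Fin r → FDRep ℂ G)
    (hsimple : ∀ i, Simple (V i))
    (hpairwise : ∀ i j, i ≠ j → ¬ Nonempty (V i ≅ V j))
    (hcomplete : ∀ W : FDRep ℂ G, Simple W → ∃ i, Nonempty (W ≅ V i))
    (k : Fin r → ℂ)
    (hk : ∀ i, k i = (Fintype.card G : ℂ)⁻¹ * ∑ g : G, D.character g * (V i).character (g⁻¹))
    (hknz : ∀ i, k i ≠ 0) :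
    IsUnit (charMatrix D).det ∧
      ∀ g h : G, (charMatrix D)⁻¹ g h
        = ((Fintype.card G : ℂ) ^ 2)⁻¹
            * ∑ i : Fin r, ((Module.finrank ℂ (V i) : ℂ) ^ 2 / k i) * (V i).character (g⁻¹ * h) := by
  obtain rfl : k = fun i => charCoeff (V i) D.character := funext fun i => by
    rw [hk, charCoeff_apply, Nat.card_eq_fintype_card]
  obtain ⟨hunit, hinv⟩ := inv_charMatrix_general (fun i j => hpairwise i j) hcomplete
    (isClassFunction_character D) hknz
  rw [Nat.card_eq_fintype_card] at hinv
  exact ⟨hunit, fun g h => congrFun₂ hinv g h⟩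
end

section
/- Let d be a natural number and let D be the permutation-of-factors representation of S₄ on ℂ^{({1,2,3,4}→{1,…,d})} ≅ (ℂ^d)^{⊗4}, defined by D(π)e_f = e_{f∘π⁻¹}. Then: (1) the dimension of the space of S₄-equivariant linear maps from the trivial representation to D equals d(d+1)(d+2)(d+3)/24; (2) the dimension of the space of S₄-equivariant linear maps from the sign representation to D equals d(d−1)(d−2)(d−3)/24; (3) for every 2-dimensional irreducible complex representation W of S₄, the dimension of the space of S₄-equivariant linear maps from W to D equals d²(d²−1)/12; (4) the dimension of the space of S₄-equivariant linear maps from the standard representation of S₄ to D equals d(d²−1)(d+2)/8; and (5) the dimension of the space of S₄-equivariant linear maps from the tensor product of the standard representation with the sign representation to D equals d(d²−1)(d−2)/8. -/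
open Matrix

/-- The submodule of `G`-equivariant linear maps between two spaces carrying
`G`-actions by linear maps. -/
def equivariantHoms {G : Type*} (V W : Type*)
    [AddCommGroup V] [Module ℂ V] [AddCommGroup W] [Module ℂ W]
    (ρV : G → V →ₗ[ℂ] V) (ρW : G → W →ₗ[ℂ] W) : Submodule ℂ (V →ₗ[ℂ] W) where
  carrier := { T | ∀ g : G, T ∘ₗ ρV g = ρW g ∘ₗ T }
  add_mem' := by
    intro a b ha hb g
    rw [LinearMap.add_comp, LinearMap.comp_add, ha g, hb g]
  zero_mem' := by
    intro g
    rw [LinearMap.zero_comp, LinearMap.comp_zero]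
  smul_mem' := by
    intro c T hT g
    rw [LinearMap.smul_comp, LinearMap.comp_smul, hT g]

/-- The permutation-of-factors representation of `S_n` on `ℂ^{({1,…,n} → {1,…,d})}`,
with `D(π) e_f = e_{f ∘ π⁻¹}`, i.e. `(D(π) φ) g = φ (g ∘ π)`. -/
def Dact (n d : ℕ) (π : Equiv.Perm (Fin n)) :
    ((Fin n → Fin d) → ℂ) →ₗ[ℂ] ((Fin n → Fin d) → ℂ) where
  toFun φ := fun g => φ (g ∘ π)
  map_add' _ _ := rfl
  map_smul' _ _ := rfl

/-- The subspace `{x ∈ ℂ^n : ∑ i, x i = 0}` underlying the standard representation. -/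
noncomputable def sumZero (n : ℕ) : Submodule ℂ (Fin n → ℂ) where
  carrier := { x | ∑ i, x i = 0 }
  add_mem' := by
    intro a b ha hb
    simp only [Set.mem_setOf_eq, Pi.add_apply, Finset.sum_add_distrib] at *
    rw [ha, hb, add_zero]
  zero_mem' := by simp
  smul_mem' := by
    intro c x hx
    simp only [Set.mem_setOf_eq, Pi.smul_apply, smul_eq_mul, ← Finset.mul_sum] at *
    rw [hx, mul_zero]

/-- The standard representation of `S_n` on `{x : ∑ i, x i = 0}`, with
`(π · x)_i = x_{π⁻¹(i)}`. -/
noncomputable def stdAct (n : ℕ) (π : Equiv.Perm (Fin n)) : (sumZero n) →ₗ[ℂ] (sumZero n) where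
  toFun x := ⟨fun i => x.1 (π⁻¹ i), (Equiv.sum_comp (π⁻¹ : Equiv.Perm (Fin n)) x.1).trans x.2⟩
  map_add' _ _ := rfl
  map_smul' _ _ := rfl


/-! Multiplicities are inner products of characters, which for `S₄` are sums over the five conjugacy
classes. The operator `D(π)` permutes the basis vectors `e_f`, and `f ∘ π = f` means that `f` is
constant on the cycles of `π`, so the character of `D` is `d` to the number of cycles. A
2-dimensional irreducible representation need not be constructed: Schur's lemma makes its character
orthogonal to those of the trivial, sign, standard and standard ⊗ sign representations, and these
four linear equations, together with the value 2 at the identity, determine it. -/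

open Equiv Equiv.Perm Module Representation

section Representation

variable {k G V : Type*} [Field k] [AddCommGroup V] [Module k V]

lemma isIrreducible_iff_forall_submodule [Monoid G] {ρ : Representation k G V} :
    IsIrreducible ρ ↔ Nontrivial V ∧
      ∀ p : Submodule k V, (∀ g, ∀ x ∈ p, ρ g x ∈ p) → p = ⊥ ∨ p = ⊤ := by
  have h_top : (⊤ : Subrepresentation ρ) ≠ ⊥ ↔ Nontrivial V :=
    (Subrepresentation.toSubmodule_injective.ne_iff (x := ⊤) (y := ⊥)).symm.trans
      ⟨fun h => (Submodule.nontrivial_iff k).1 ⟨⊤, ⊥, h⟩, fun _ => top_ne_bot⟩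
  rw [Representation.IsIrreducible, isSimpleOrder_iff, ← h_top]
  refine and_congr ⟨fun _ => top_ne_bot, fun h => ⟨⊤, ⊥, h⟩⟩ ⟨fun h p hp => ?_, fun h p => ?_⟩
  · exact (h ⟨p, hp⟩).imp (congrArg Subrepresentation.toSubmodule)
      (congrArg Subrepresentation.toSubmodule)
  · exact (h p.toSubmodule p.apply_mem_toSubmodule).imp
      (fun h => Subrepresentation.toSubmodule_injective h)
      (fun h => Subrepresentation.toSubmodule_injective h)

lemma isIrreducible_of_finrank_eq_one [Monoid G] (ρ : Representation k G V)
    (h : finrank k V = 1) : IsIrreducible ρ := by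
  have := is_simple_module_of_finrank_eq_one (A := k) h
  exact isIrreducible_iff_forall_submodule.2
    ⟨nontrivial_of_finrank_eq_succ h, fun p _ => eq_bot_or_eq_top p⟩

/-- The twist `χ ⊗ ρ` of a representation `ρ` by a linear character `χ`, realised on the space
of `ρ`. -/
def twist [Monoid G] (χ : G →* k) (ρ : Representation k G V) : Representation k G V where
  toFun g := χ g • ρ g
  map_one' := by rw [map_one, map_one, one_smul]
  map_mul' g h := by rw [map_mul, map_mul, smul_mul_smul_comm]

lemma character_twist [Monoid G] (χ : G →* k) (ρ : Representation k G V) (g : G) :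
    (twist χ ρ).character g = χ g * ρ.character g := by
  rw [character, character, twist, MonoidHom.coe_mk, OneHom.coe_mk, map_smul, smul_eq_mul]

lemma isIrreducible_twist [Group G] (χ : G →* k) (ρ : Representation k G V) [IsIrreducible ρ] :
    IsIrreducible (twist χ ρ) := by
  obtain ⟨hV, h⟩ := isIrreducible_iff_forall_submodule.1 ‹IsIrreducible ρ›
  refine isIrreducible_iff_forall_submodule.2 ⟨hV, fun p hp => h p fun g x hx => ?_⟩
  exact (p.smul_mem_iff ((Group.isUnit g).map χ).ne_zero).1 (hp g x hx)

lemma character_trivial [Monoid G] (g : G) : (trivial k G k).character g = 1 := by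
  simp [character]

lemma character_eq_of_isConj [Group G] (ρ : Representation k G V) {g h : G} (hgh : IsConj g h) :
    ρ.character g = ρ.character h := by
  obtain ⟨c, rfl⟩ := isConj_iff.1 hgh
  exact (char_conj ρ g c).symm

lemma character_perm_inv {α : Type*} [Finite α] (ρ : Representation k (Perm α) V) (π : Perm α) :
    ρ.character π⁻¹ = ρ.character π := by
  classical
  have := Fintype.ofFinite α
  exact character_eq_of_isConj ρ (isConj_iff_cycleType_eq.2 (cycleType_inv π))

end Representation

section EquivariantHoms

variable {G V W : Type*} [Group G] [AddCommGroup V] [Module ℂ V] [AddCommGroup W] [Module ℂ W]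
  (ρ : Representation ℂ G V) (σ : Representation ℂ G W)

lemma equivariantHoms_eq_invariants_linHom :
    equivariantHoms V W ρ σ = (linHom ρ σ).invariants := by
  ext T
  rw [mem_invariants]
  refine Iff.trans ?_ (mem_linHom_invariants_iff_isIntertwining T).symm
  rw [isIntertwiningMap_iff]
  exact forall_congr' fun g => LinearMap.ext_iff

lemma finrank_equivariantHoms_eq_finrank_intertwiningMap :
    finrank ℂ (equivariantHoms V W ρ σ) = finrank ℂ (IntertwiningMap ρ σ) := by
  rw [equivariantHoms_eq_invariants_linHom, (invariantsEquivIntertwiningMap ρ σ).finrank_eq]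

lemma finrank_equivariantHoms_eq_zero [IsIrreducible ρ] [IsIrreducible σ]
    (h : finrank ℂ V ≠ finrank ℂ W) : finrank ℂ (equivariantHoms V W ρ σ) = 0 := by
  have : IsEmpty (ρ.Equiv σ) := ⟨fun e => h e.toLinearEquiv.finrank_eq⟩
  rw [finrank_equivariantHoms_eq_finrank_intertwiningMap, finrank_zero_of_subsingleton]

lemma card_mul_finrank_equivariantHoms [Fintype G] [FiniteDimensional ℂ V]
    [FiniteDimensional ℂ W] :
    (Nat.card G : ℂ) * finrank ℂ (equivariantHoms V W ρ σ) =
      ∑ g, ρ.character g⁻¹ * σ.character g := by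
  have card_ne_zero : (Nat.card G : ℂ) ≠ 0 := Nat.cast_ne_zero.2 Nat.card_pos.ne'
  have := invertibleOfNonzero card_ne_zero
  rw [finrank_equivariantHoms_eq_finrank_intertwiningMap,
    ← card_inv_mul_sum_char_mul_char_eq_finrank, mul_inv_cancel_left₀ card_ne_zero]
  simp only [mul_comm]

end EquivariantHoms

section PermutationCharacter

lemma trace_funLeft_perm {R α : Type*} [CommRing R] [Finite α] (π : Perm α) :
    LinearMap.trace R (α → R) (LinearMap.funLeft R R π) = (Function.fixedPoints π).ncard := by
  classical
  have := Fintype.ofFinite α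
  have funLeft_eq : LinearMap.funLeft R R π = (π.permMatrix R).toLin' :=
    LinearMap.ext fun _ => (Matrix.permMatrix_mulVec π).symm
  rw [funLeft_eq, Matrix.trace_toLin'_eq, Matrix.trace_permutation]

/-- The number of cycles of a permutation, fixed points included. -/
noncomputable def cycleCount {α : Type*} (π : Perm α) : ℕ :=
  Nat.card (Quotient (SameCycle.setoid π))

lemma comp_perm_eq_self_iff {α β : Type*} {π : Perm α} {f : α → β} :
    f ∘ π = f ↔ SameCycle.setoid π ≤ Setoid.ker f := by
  refine ⟨fun h x y => ?_, fun h => funext fun x => (h ⟨1, rfl⟩).symm⟩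
  rintro ⟨m, rfl⟩
  have mk_mem : DomMulAct.mk π ∈ MulAction.stabilizer (Perm α)ᵈᵐᵃ f :=
    DomMulAct.mem_stabilizer_iff.2 h
  have comp_zpow : f ∘ (π ^ m : Perm α) = f := DomMulAct.mem_stabilizer_iff.1 (zpow_mem mk_mem m)
  exact (congrFun comp_zpow x).symm

lemma ncard_comp_perm_eq_self {α β : Type*} [Finite α] (π : Perm α) :
    {f : α → β | f ∘ π = f}.ncard = Nat.card β ^ cycleCount π := by
  simp only [comp_perm_eq_self_iff]
  rw [← Nat.card_coe_set_eq, cycleCount, ← Nat.card_fun]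
  exact Nat.card_congr (Setoid.liftEquiv _)

/-- `Dact` as a bundled representation. -/
def dactRep (n d : ℕ) : Representation ℂ (Perm (Fin n)) ((Fin n → Fin d) → ℂ) where
  toFun := Dact n d
  map_one' := rfl
  map_mul' _ _ := rfl

lemma character_dactRep (n d : ℕ) (π : Perm (Fin n)) :
    (dactRep n d).character π = (d : ℂ) ^ cycleCount π := by
  calc (dactRep n d).character π
      = LinearMap.trace ℂ _ (LinearMap.funLeft ℂ ℂ (π⁻¹.arrowCongr (Equiv.refl (Fin d)))) := rfl
    _ = {f : Fin n → Fin d | f ∘ π = f}.ncard := trace_funLeft_perm _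
    _ = (d : ℂ) ^ cycleCount π := by rw [ncard_comp_perm_eq_self, Nat.card_fin, Nat.cast_pow]

end PermutationCharacter

section StandardRepresentation

/-- `stdAct` as a bundled representation. -/
noncomputable def stdRep (n : ℕ) : Representation ℂ (Perm (Fin n)) (sumZero n) where
  toFun := stdAct n
  map_one' := rfl
  map_mul' _ _ := rfl

/-- The mean value of the coordinates of a vector, as a linear form; it is used to split off the
constant vectors from the hyperplane `sumZero n`. -/
noncomputable def mean (n : ℕ) : (Fin n → ℂ) →ₗ[ℂ] ℂ :=
  (n : ℂ)⁻¹ • ∑ i, LinearMap.proj i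

lemma mean_apply (n : ℕ) (x : Fin n → ℂ) : mean n x = (n : ℂ)⁻¹ * ∑ i, x i := by
  simp [mean]

lemma mean_one (n : ℕ) [NeZero n] : mean n 1 = 1 := by
  simp [mean_apply]

lemma mem_sumZero {n : ℕ} {x : Fin n → ℂ} : x ∈ sumZero n ↔ ∑ i, x i = 0 := Iff.rfl

lemma sub_mean_mem_sumZero (n : ℕ) [NeZero n] (x : Fin n → ℂ) :
    (LinearMap.id - (mean n).smulRight 1 : (Fin n → ℂ) →ₗ[ℂ] Fin n → ℂ) x ∈ sumZero n := by
  simp [mem_sumZero, mean_apply, mul_inv_cancel_left₀ (NeZero.ne (n : ℂ))]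

/-- The projection of `ℂⁿ` onto `sumZero n` along the constant vectors. -/
noncomputable def subMean (n : ℕ) [NeZero n] : (Fin n → ℂ) →ₗ[ℂ] sumZero n :=
  (LinearMap.id - (mean n).smulRight 1).codRestrict _ (sub_mean_mem_sumZero n)

lemma subMean_comp_subtype (n : ℕ) [NeZero n] :
    subMean n ∘ₗ (sumZero n).subtype = LinearMap.id := by
  ext x i
  simp [subMean, mean_apply, mem_sumZero.1 x.2]

lemma subtype_comp_stdAct_comp_subMean {n : ℕ} [NeZero n] (π : Perm (Fin n)) :
    (sumZero n).subtype ∘ₗ stdAct n π ∘ₗ subMean n =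
      LinearMap.funLeft ℂ ℂ ⇑(π⁻¹) - (mean n).smulRight 1 := rfl

lemma character_stdRep (n : ℕ) [NeZero n] (π : Perm (Fin n)) :
    (stdRep n).character π = (Function.fixedPoints π).ncard - 1 := by
  rw [← character_perm_inv]
  calc LinearMap.trace ℂ _ (stdAct n π⁻¹)
      = LinearMap.trace ℂ _ ((stdAct n π⁻¹ ∘ₗ subMean n) ∘ₗ (sumZero n).subtype) := by
        rw [LinearMap.comp_assoc, subMean_comp_subtype, LinearMap.comp_id]
    _ = LinearMap.trace ℂ _ (LinearMap.funLeft ℂ ℂ π - (mean n).smulRight 1) := by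
        rw [LinearMap.trace_comp_comm', subtype_comp_stdAct_comp_subMean, inv_inv]
    _ = (Function.fixedPoints π).ncard - 1 := by
        rw [map_sub, trace_funLeft_perm, LinearMap.trace_smulRight, mean_one]

lemma finrank_sumZero (n : ℕ) [NeZero n] : finrank ℂ (sumZero n) = n - 1 := by
  have h : (finrank ℂ (sumZero n) : ℂ) + 1 = n := by
    rw [← char_one (stdRep n), character_stdRep]
    simp [Function.fixedPoints, Function.IsFixedPt]
  have h' : finrank ℂ (sumZero n) + 1 = n := by exact_mod_cast h
  omega

lemma single_sub_single_mem_sumZero {n : ℕ} (i j : Fin n) :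
    (Pi.single i 1 - Pi.single j 1 : Fin n → ℂ) ∈ sumZero n := by
  simp [mem_sumZero]

/-- The root vector `eᵢ - eⱼ`; these span `sumZero n`. -/
noncomputable def rootVector {n : ℕ} (i j : Fin n) : sumZero n :=
  ⟨Pi.single i 1 - Pi.single j 1, single_sub_single_mem_sumZero i j⟩

lemma stdAct_rootVector {n : ℕ} (π : Perm (Fin n)) (i j : Fin n) :
    stdAct n π (rootVector i j) = rootVector (π i) (π j) := by
  ext l
  simp [stdAct, rootVector, Pi.single_apply, symm_apply_eq]

lemma sub_stdAct_swap {n : ℕ} (x : sumZero n) (i j : Fin n) :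
    x - stdAct n (swap i j) x = (x.1 i - x.1 j) • rootVector i j := by
  ext l
  rcases eq_or_ne l i with rfl | hi
  · rcases eq_or_ne l j with rfl | hj <;> simp [stdAct, rootVector, *]
  · rcases eq_or_ne l j with rfl | hj <;> simp [stdAct, rootVector, swap_apply_of_ne_of_ne, *]

lemma eq_sum_smul_rootVector {n : ℕ} (x : sumZero n) (j : Fin n) :
    x = ∑ i, x.1 i • rootVector i j := by
  have h : ∑ i, x.1 i = 0 := x.2
  ext l
  simp [rootVector, mul_sub, Finset.sum_sub_distrib, h, Pi.single_apply]

lemma exists_ne_of_ne_zero {n : ℕ} {x : sumZero n} (hx : x ≠ 0) : ∃ i j, x.1 i ≠ x.1 j := by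
  contrapose! hx
  ext i
  have : NeZero n := ⟨(Fin.pos i).ne'⟩
  have h : ∑ j, x.1 j = 0 := x.2
  simpa [fun j => hx j i, NeZero.ne n] using h

lemma isIrreducible_stdRep {n : ℕ} (hn : 2 ≤ n) : IsIrreducible (stdRep n) := by
  have : NeZero n := ⟨by omega⟩
  refine isIrreducible_iff_forall_submodule.2
    ⟨nontrivial_of_finrank_pos (R := ℂ) (by rw [finrank_sumZero]; omega), fun p hp => ?_⟩
  refine or_iff_not_imp_left.2 fun p_ne_bot => ?_
  obtain ⟨x, hxp, hx⟩ := p.ne_bot_iff.1 p_ne_bot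
  obtain ⟨i, j, hij⟩ := exists_ne_of_ne_zero hx
  have root_mem : rootVector i j ∈ p := by
    rw [← p.smul_mem_iff (sub_ne_zero.2 hij), ← sub_stdAct_swap]
    exact p.sub_mem hxp (hp _ _ hxp)
  have roots_mem : ∀ k l, rootVector k l ∈ p := fun k l => by
    rcases eq_or_ne k l with rfl | hkl
    · have : rootVector k k = 0 := by ext; simp [rootVector]
      exact this ▸ p.zero_mem
    obtain ⟨π, rfl, rfl⟩ := MulAction.is_two_pretransitive_iff.1
      (isMultiplyPretransitive (Fin n) 2) (ne_of_apply_ne x.1 hij) hkl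
    exact stdAct_rootVector π i j ▸ hp π _ root_mem
  rw [eq_top_iff]
  intro y _
  rw [eq_sum_smul_rootVector y 0]
  exact p.sum_mem fun k _ => p.smul_mem _ (roots_mem k 0)

end StandardRepresentation

section ClassSums

lemma sum_eq_sum_card_conj_smul {G ι M : Type*} [Monoid G] [Fintype G]
    [DecidableRel (IsConj : G → G → Prop)] [Fintype ι] [AddCommMonoid M] {r : ι → G}
    (hr : ∀ g, ∃! i, IsConj (r i) g) {f : G → M} (hf : ∀ g h, IsConj g h → f g = f h) :
    ∑ g, f g = ∑ i, Finset.card {g | IsConj (r i) g} • f (r i) := by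
  classical
  choose c hc hc_unique using hr
  have fiber_eq : ∀ i, (Finset.univ.filter fun g => c g = i) =
      Finset.univ.filter fun g => IsConj (r i) g := fun i =>
    Finset.filter_congr fun g _ => ⟨fun h => h ▸ hc g, fun h => (hc_unique g i h).symm⟩
  rw [← Finset.sum_fiberwise Finset.univ c f]
  refine Finset.sum_congr rfl fun i _ => ?_
  rw [fiber_eq, ← Finset.sum_const]
  exact Finset.sum_congr rfl fun g hg => (hf _ _ (Finset.mem_filter.1 hg).2).symm

end ClassSums

section SymmetricGroupFour

variable {V W : Type*} [AddCommGroup V] [Module ℂ V] [AddCommGroup W] [Module ℂ W]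

/-- Representatives of the five conjugacy classes of `S₄`, indexing the columns of its character
table. -/
def classRep : Fin 5 → Perm (Fin 4) :=
  ![1, c[0, 1], c[0, 1] * c[2, 3], c[0, 1, 2], c[0, 1, 2, 3]]

/-- The sizes of the conjugacy classes of the `classRep i`. -/
def classSize : Fin 5 → ℕ := ![1, 6, 3, 8, 6]

lemma existsUnique_isConj_classRep (g : Perm (Fin 4)) : ∃! i, IsConj (classRep i) g := by
  unfold ExistsUnique
  revert g
  decide +kernel

lemma card_isConj_classRep (i : Fin 5) :
    Finset.card {g | IsConj (classRep i) g} = classSize i := by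
  revert i
  decide +kernel

lemma cycleCount_classRep (i : Fin 5) : cycleCount (classRep i) = ![4, 3, 2, 2, 1] i := by
  let _ (π : Perm (Fin 4)) : DecidableRel (SameCycle.setoid π) :=
    inferInstanceAs (DecidableRel (SameCycle π))
  rw [cycleCount, Nat.card_eq_fintype_card]
  decide +kernel +revert

lemma ncard_fixedPoints_classRep (i : Fin 5) :
    (Function.fixedPoints (classRep i)).ncard = ![4, 2, 0, 1, 0] i := by
  rw [Set.ncard_eq_toFinset_card']
  revert i
  decide +kernel

lemma sign_classRep (i : Fin 5) : sign (classRep i) = ![1, -1, 1, 1, -1] i := by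
  revert i
  decide +kernel

lemma sum_classSize_mul {R : Type*} [Semiring R] (f : Fin 5 → R) :
    ∑ i, classSize i * f i = f 0 + 6 * f 1 + 3 * f 2 + 8 * f 3 + 6 * f 4 := by
  simp [Fin.sum_univ_five, classSize]

lemma mul_finrank_equivariantHoms_eq_sum_classRep (ρ : Representation ℂ (Perm (Fin 4)) V)
    (σ : Representation ℂ (Perm (Fin 4)) W) [FiniteDimensional ℂ V] [FiniteDimensional ℂ W] :
    24 * (finrank ℂ (equivariantHoms V W ρ σ) : ℂ) =
      ∑ i, classSize i * (ρ.character (classRep i) * σ.character (classRep i)) := by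
  have card_eq : Nat.card (Perm (Fin 4)) = 24 := by
    rw [Nat.card_perm, Nat.card_fin]; rfl
  have h := card_mul_finrank_equivariantHoms ρ σ
  simp only [card_eq, Nat.cast_ofNat, character_perm_inv] at h
  rw [h, sum_eq_sum_card_conj_smul existsUnique_isConj_classRep fun g h hgh => by
    rw [character_eq_of_isConj ρ hgh, character_eq_of_isConj σ hgh]]
  simp only [card_isConj_classRep, nsmul_eq_mul]

lemma sum_character_mul_character_eq_zero (ρ : Representation ℂ (Perm (Fin 4)) V)
    (σ : Representation ℂ (Perm (Fin 4)) W) [FiniteDimensional ℂ V] [FiniteDimensional ℂ W]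
    [IsIrreducible ρ] [IsIrreducible σ] (h : finrank ℂ V ≠ finrank ℂ W) :
    ∑ i, classSize i * (ρ.character (classRep i) * σ.character (classRep i)) = 0 := by
  rw [← mul_finrank_equivariantHoms_eq_sum_classRep, finrank_equivariantHoms_eq_zero ρ σ h,
    Nat.cast_zero, mul_zero]

lemma mul_finrank_equivariantHoms_dactRep (ρ : Representation ℂ (Perm (Fin 4)) V)
    [FiniteDimensional ℂ V] (d : ℕ) :
    24 * (finrank ℂ (equivariantHoms V ((Fin 4 → Fin d) → ℂ) ρ (dactRep 4 d)) : ℂ) =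
      ρ.character (classRep 0) * d ^ 4 + 6 * (ρ.character (classRep 1) * d ^ 3) +
        3 * (ρ.character (classRep 2) * d ^ 2) + 8 * (ρ.character (classRep 3) * d ^ 2) +
        6 * (ρ.character (classRep 4) * d) := by
  simp [mul_finrank_equivariantHoms_eq_sum_classRep, character_dactRep, cycleCount_classRep,
    sum_classSize_mul]

/-- The sign as a linear character with complex values. -/
def signChar (α : Type*) [Fintype α] [DecidableEq α] : Perm α →* ℂ :=
  (Int.castRingHom ℂ).toMonoidHom.comp ((Units.coeHom ℤ).comp sign)

lemma signChar_classRep (i : Fin 5) : signChar (Fin 4) (classRep i) = ![1, -1, 1, 1, -1] i := by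
  change ((sign (classRep i) : ℤ) : ℂ) = _
  rw [sign_classRep]
  fin_cases i <;> simp

lemma character_stdRep_classRep (i : Fin 5) :
    (stdRep 4).character (classRep i) = ![3, 1, -1, 0, -1] i := by
  rw [character_stdRep, ncard_fixedPoints_classRep]
  fin_cases i <;> norm_num

lemma character_classRep_of_finrank_eq_two (ρ : Representation ℂ (Perm (Fin 4)) V)
    [IsIrreducible ρ] (h : finrank ℂ V = 2) (i : Fin 5) :
    ρ.character (classRep i) = ![2, 0, 2, -1, 0] i := by
  have : FiniteDimensional ℂ V := .of_finrank_pos (by omega)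
  have := isIrreducible_of_finrank_eq_one (trivial ℂ (Perm (Fin 4)) ℂ) (finrank_self ℂ)
  have := isIrreducible_stdRep (n := 4) (by norm_num)
  have := isIrreducible_twist (signChar (Fin 4)) (trivial ℂ (Perm (Fin 4)) ℂ)
  have := isIrreducible_twist (signChar (Fin 4)) (stdRep 4)
  have finrank_ne_one : finrank ℂ V ≠ finrank ℂ ℂ := by rw [h, finrank_self]; norm_num
  have finrank_ne_three : finrank ℂ V ≠ finrank ℂ (sumZero 4) := by
    rw [h, finrank_sumZero]; norm_num
  have h_one : ρ.character (classRep 0) = 2 := by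
    rw [show classRep 0 = 1 from rfl, char_one, h, Nat.cast_ofNat]
  set χ : Fin 5 → ℂ := fun i => ρ.character (classRep i)
  have h_triv : 2 + 6 * χ 1 + 3 * χ 2 + 8 * χ 3 + 6 * χ 4 = 0 := by
    simpa [sum_classSize_mul, character_trivial, h_one] using
      sum_character_mul_character_eq_zero ρ (trivial ℂ _ ℂ) finrank_ne_one
  have h_sign : 2 - 6 * χ 1 + 3 * χ 2 + 8 * χ 3 - 6 * χ 4 = 0 := by
    simpa [sum_classSize_mul, character_twist, character_trivial, signChar_classRep, h_one,
      ← sub_eq_add_neg] using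
      sum_character_mul_character_eq_zero ρ (twist (signChar _) (trivial ℂ _ ℂ)) finrank_ne_one
  have h_std : 2 * 3 + 6 * χ 1 - 3 * χ 2 - 6 * χ 4 = 0 := by
    simpa [sum_classSize_mul, character_stdRep_classRep, h_one, ← sub_eq_add_neg] using
      sum_character_mul_character_eq_zero ρ (stdRep 4) finrank_ne_three
  have h_std_sign : 2 * 3 - 6 * χ 1 - 3 * χ 2 + 6 * χ 4 = 0 := by
    simpa [sum_classSize_mul, character_twist, character_stdRep_classRep, signChar_classRep, h_one,
      ← sub_eq_add_neg] using
      sum_character_mul_character_eq_zero ρ (twist (signChar _) (stdRep 4)) finrank_ne_three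
  change χ i = _
  fin_cases i
  · exact h_one
  · change χ 1 = 0
    linear_combination (h_triv - h_sign + h_std - h_std_sign) / 24
  · change χ 2 = 2
    linear_combination -(h_std + h_std_sign) / 6
  · change χ 3 = -1
    linear_combination (h_triv + h_sign + h_std + h_std_sign) / 16
  · change χ 4 = 0
    linear_combination (h_triv - h_sign - h_std + h_std_sign) / 24

end SymmetricGroupFour

section Multiplicities

lemma eq_div_of_cast_mul_eq {R : Type*} [Semiring R] [CharZero R] {k m N : ℕ} (hk : k ≠ 0)
    (h : (k : R) * m = N) : m = N / k :=
  Nat.eq_div_of_mul_eq_right hk (by exact_mod_cast h)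

lemma cast_mul_sub_one_sub_two_sub_three {R : Type*} [CommRing R] (d : ℕ) :
    ((d * (d - 1) * (d - 2) * (d - 3) : ℕ) : R) = d * (d - 1) * (d - 2) * (d - 3) := by
  rcases d with _ | _ | _ | d <;> (simp [add_assoc]; try ring)

lemma cast_mul_sq_sub_one {R : Type*} [CommRing R] (d : ℕ) :
    ((d * (d ^ 2 - 1) : ℕ) : R) = d * (d ^ 2 - 1) := by
  rcases d.eq_zero_or_pos with rfl | hd
  · simp
  · rw [Nat.cast_mul, Nat.cast_sub (Nat.one_le_pow 2 d hd), Nat.cast_pow, Nat.cast_one]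

lemma cast_mul_sq_sub_one_mul_sub_two {R : Type*} [CommRing R] (d : ℕ) :
    ((d * (d ^ 2 - 1) * (d - 2) : ℕ) : R) = d * (d ^ 2 - 1) * (d - 2) := by
  rw [Nat.cast_mul, cast_mul_sq_sub_one]
  rcases d with _ | _ | d <;> simp
  ring

variable (d : ℕ)

lemma finrank_equivariantHoms_trivial_dactRep :
    finrank ℂ (equivariantHoms ℂ _ (trivial ℂ (Perm (Fin 4)) ℂ) (dactRep 4 d)) =
      d * (d + 1) * (d + 2) * (d + 3) / 24 := by
  have h := mul_finrank_equivariantHoms_dactRep (trivial ℂ (Perm (Fin 4)) ℂ) d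
  simp only [character_trivial] at h
  refine eq_div_of_cast_mul_eq (R := ℂ) (by norm_num) ?_
  push_cast
  linear_combination h

lemma finrank_equivariantHoms_sign_dactRep :
    finrank ℂ (equivariantHoms ℂ _ (twist (signChar (Fin 4)) (trivial ℂ _ ℂ)) (dactRep 4 d)) =
      d * (d - 1) * (d - 2) * (d - 3) / 24 := by
  have h := mul_finrank_equivariantHoms_dactRep (twist (signChar (Fin 4)) (trivial ℂ _ ℂ)) d
  simp only [character_twist, character_trivial, signChar_classRep, cons_val] at h
  refine eq_div_of_cast_mul_eq (R := ℂ) (by norm_num) ?_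
  rw [cast_mul_sub_one_sub_two_sub_three]
  linear_combination h

lemma finrank_equivariantHoms_dactRep_of_finrank_eq_two {W : Type*} [AddCommGroup W] [Module ℂ W]
    (ρ : Representation ℂ (Perm (Fin 4)) W) [IsIrreducible ρ] (hW : finrank ℂ W = 2) :
    finrank ℂ (equivariantHoms W _ ρ (dactRep 4 d)) = d ^ 2 * (d ^ 2 - 1) / 12 := by
  have : FiniteDimensional ℂ W := .of_finrank_pos (by omega)
  have h := mul_finrank_equivariantHoms_dactRep ρ d
  simp only [character_classRep_of_finrank_eq_two ρ hW, cons_val] at h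
  refine eq_div_of_cast_mul_eq (R := ℂ) (by norm_num) ?_
  rw [sq, mul_assoc, ← sq, Nat.cast_mul, cast_mul_sq_sub_one]
  linear_combination h / 2

lemma finrank_equivariantHoms_stdRep_dactRep :
    finrank ℂ (equivariantHoms (sumZero 4) _ (stdRep 4) (dactRep 4 d)) =
      d * (d ^ 2 - 1) * (d + 2) / 8 := by
  have h := mul_finrank_equivariantHoms_dactRep (stdRep 4) d
  simp only [character_stdRep_classRep, cons_val] at h
  refine eq_div_of_cast_mul_eq (R := ℂ) (by norm_num) ?_
  rw [Nat.cast_mul, cast_mul_sq_sub_one]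
  push_cast
  linear_combination h / 3

lemma finrank_equivariantHoms_stdRep_sign_dactRep :
    finrank ℂ (equivariantHoms (sumZero 4) _ (twist (signChar (Fin 4)) (stdRep 4)) (dactRep 4 d)) =
      d * (d ^ 2 - 1) * (d - 2) / 8 := by
  have h := mul_finrank_equivariantHoms_dactRep (twist (signChar (Fin 4)) (stdRep 4)) d
  simp only [character_twist, character_stdRep_classRep, signChar_classRep, cons_val] at h
  refine eq_div_of_cast_mul_eq (R := ℂ) (by norm_num) ?_
  rw [cast_mul_sq_sub_one_mul_sub_two]
  linear_combination h / 3

end Multiplicities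

theorem multiplicities_S4 (d : ℕ) :
    Module.finrank ℂ
        (equivariantHoms ℂ ((Fin 4 → Fin d) → ℂ)
          (fun _ : Equiv.Perm (Fin 4) => LinearMap.id) (Dact 4 d))
      = d * (d + 1) * (d + 2) * (d + 3) / 24 ∧
    Module.finrank ℂ
        (equivariantHoms ℂ ((Fin 4 → Fin d) → ℂ)
          (fun π : Equiv.Perm (Fin 4) => ((Equiv.Perm.sign π : ℤ) : ℂ) • LinearMap.id)
          (Dact 4 d))
      = d * (d - 1) * (d - 2) * (d - 3) / 24 ∧
    (∀ (W : Type) [AddCommGroup W] [Module ℂ W]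
        (ρW : Representation ℂ (Equiv.Perm (Fin 4)) W),
        Module.finrank ℂ W = 2 →
        (∀ p : Submodule ℂ W,
          (∀ π : Equiv.Perm (Fin 4), ∀ x ∈ p, ρW π x ∈ p) → p = ⊥ ∨ p = ⊤) →
        Module.finrank ℂ
            (equivariantHoms W ((Fin 4 → Fin d) → ℂ) (fun π => ρW π) (Dact 4 d))
          = d ^ 2 * (d ^ 2 - 1) / 12) ∧
    Module.finrank ℂ
        (equivariantHoms (sumZero 4) ((Fin 4 → Fin d) → ℂ) (stdAct 4) (Dact 4 d))
      = d * (d ^ 2 - 1) * (d + 2) / 8 ∧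
    Module.finrank ℂ
        (equivariantHoms (sumZero 4) ((Fin 4 → Fin d) → ℂ)
          (fun π : Equiv.Perm (Fin 4) => ((Equiv.Perm.sign π : ℤ) : ℂ) • stdAct 4 π)
          (Dact 4 d))
      = d * (d ^ 2 - 1) * (d - 2) / 8 := by
  refine ⟨finrank_equivariantHoms_trivial_dactRep d, finrank_equivariantHoms_sign_dactRep d,
    fun W _ _ ρW hW hρW => ?_, finrank_equivariantHoms_stdRep_dactRep d,
    finrank_equivariantHoms_stdRep_sign_dactRep d⟩
  have : Representation.IsIrreducible ρW :=
    isIrreducible_iff_forall_submodule.2 ⟨nontrivial_of_finrank_eq_succ hW, hρW⟩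
  exact finrank_equivariantHoms_dactRep_of_finrank_eq_two d ρW hW
end
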